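/- The space of vector fields V = (V₁,V₂) with V₁, V₂ ∈ H̃^{-1/2}(Γ), whose distributional divergence div V = ∂V₁/∂x₁ + ∂V₂/∂x₂ and distributional scalar curl curl V = ∂V₁/∂x₂ − ∂V₂/∂x₁ both lie in H̃^{-1/2}(Γ), equipped with the norm whose square is ‖V‖²_H + ‖div V‖²_{H̃^{-1/2}(Γ)} + ‖curl V‖²_{H̃^{-1/2}(Γ)}, is compactly embedded in H = H̃^{-1/2}(Γ) × H̃^{-1/2}(Γ). -/

import Mathlib

noncomputable section

open MeasureTheory Complex Filter Topology
open scoped Real NNReal ContDiff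

/-- The plane `ℝ²`. -/
abbrev R2 : Type := EuclideanSpace ℝ (Fin 2)

/-- Euclidean dot product on `ℝ²`. -/
def rdot (x ξ : R2) : ℝ := x 0 * ξ 0 + x 1 * ξ 1

/-- `testFT φ ξ = ∫ e^{i x·ξ} φ(x) dx`, the (inverse-type) Fourier integral of a
test function `φ`. -/
def testFT (φ : R2 → ℂ) (ξ : R2) : ℂ :=
  ∫ x : R2, Complex.exp (Complex.I * (rdot x ξ : ℂ)) * φ x

/-- The squared `H^s(ℝ²)` norm of the distribution whose Fourier transform is `F`:
`‖f‖² = (2π)⁻² ∫ (1+|ξ|²)^s |f̂(ξ)|² dξ`. -/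
def wnormSq (s : ℝ) (F : R2 → ℂ) : ℝ :=
  ((2 * π) ^ 2)⁻¹ * ∫ ξ : R2, ((1 : ℝ) + ‖ξ‖ ^ 2) ^ s * ‖F ξ‖ ^ 2

/-- The `H^s(ℝ²)` norm (Fourier-side representation). -/
def wnorm (s : ℝ) (F : R2 → ℂ) : ℝ := Real.sqrt (wnormSq s F)

/-- `F` is the Fourier transform of an element of `H^s(ℝ²)`. -/
def MemHs (s : ℝ) (F : R2 → ℂ) : Prop :=
  AEStronglyMeasurable F (volume : Measure R2) ∧
    Integrable (fun ξ : R2 => ((1 : ℝ) + ‖ξ‖ ^ 2) ^ s * ‖F ξ‖ ^ 2) volume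

/-- An element `f` of `H̃^s(Γ)`: a distribution on `ℝ²` of Sobolev regularity `s`
supported in the closure of `Γ`, represented by its Fourier transform `ft`
(a continuous function, `f` being a compactly supported distribution).
The support condition is expressed by testing against smooth compactly supported
functions `φ` whose support avoids `closure Γ`, via the Parseval pairing
`∫ f φ dx = (2π)⁻² ∫ f̂(ξ) φ̌(ξ) dξ` with `φ̌(ξ) = ∫ e^{ix·ξ} φ(x) dx`. -/
structure HTildeElt (s : ℝ) (Γ : Set R2) where
  ft : R2 → ℂ
  cont : Continuous ft
  mem : Integrable (fun ξ : R2 => ((1 : ℝ) + ‖ξ‖ ^ 2) ^ s * ‖ft ξ‖ ^ 2) volume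
  supp : ∀ φ : R2 → ℂ, ContDiff ℝ ∞ φ → HasCompactSupport φ →
    tsupport φ ∩ closure Γ = ∅ → (∫ ξ : R2, ft ξ * testFT φ ξ) = 0

/-- `Γ` is a bounded Lipschitz domain in `ℝ²`: a nonempty bounded open set whose
boundary is locally, after a rigid motion, the graph of a Lipschitz function with
the domain on one side. -/
def IsLipschitzDomain (Γ : Set R2) : Prop :=
  IsOpen Γ ∧ Bornology.IsBounded Γ ∧ Γ.Nonempty ∧
    ∀ x ∈ frontier Γ, ∃ (e : R2 ≃ₗᵢ[ℝ] R2) (L : ℝ≥0) (f : ℝ → ℝ) (U : Set R2),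
      LipschitzWith L f ∧ IsOpen U ∧ x ∈ U ∧
        ∀ y ∈ U, (y ∈ Γ ↔ f (e y 0) < e y 1)

/-- `ξ·V̂(ξ)`, i.e. `-i` times the Fourier transform of `div V`. -/
def dotFt (F1 F2 : R2 → ℂ) (ξ : R2) : ℂ := (ξ 0 : ℂ) * F1 ξ + (ξ 1 : ℂ) * F2 ξ

/-- `ξ⊥·V̂(ξ)`, i.e. `-i` times the Fourier transform of `curl V`. -/
def curlFt (F1 F2 : R2 → ℂ) (ξ : R2) : ℂ := (ξ 1 : ℂ) * F1 ξ - (ξ 0 : ℂ) * F2 ξ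

/-- An element of `X = H̃^{-1/2}_div(Γ)`: a pair of elements of `H̃^{-1/2}(Γ)`
whose distributional divergence also belongs to `H̃^{-1/2}(Γ)`. -/
structure Xelt (Γ : Set R2) where
  c1 : HTildeElt (-(1/2) : ℝ) Γ
  c2 : HTildeElt (-(1/2) : ℝ) Γ
  divMem : Integrable (fun ξ : R2 =>
    ((1 : ℝ) + ‖ξ‖ ^ 2) ^ (-(1/2) : ℝ) * ‖dotFt c1.ft c2.ft ξ‖ ^ 2) volume

/-- The Fourier transform of `div V`. -/
def divFt {Γ : Set R2} (V : Xelt Γ) (ξ : R2) : ℂ :=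
  Complex.I * dotFt V.c1.ft V.c2.ft ξ

/-- The squared `H`-norm `‖V‖²_H` of a vector field. -/
def HnormSq {Γ : Set R2} (V : Xelt Γ) : ℝ :=
  wnormSq (-(1/2)) V.c1.ft + wnormSq (-(1/2)) V.c2.ft

/-- The squared `X`-norm `‖V‖²_X = ‖V‖²_H + ‖div V‖²_{H̃^{-1/2}}`. -/
def XnormSq {Γ : Set R2} (V : Xelt Γ) : ℝ :=
  HnormSq V + wnormSq (-(1/2)) (divFt V)

/-- The `X`-norm. -/
def Xnorm {Γ : Set R2} (V : Xelt Γ) : ℝ := Real.sqrt (XnormSq V)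

/-- `ĝ₀(ξ) = i/√(k²-|ξ|²)`, with the branch `√(k²-|ξ|²) = i√(|ξ|²-k²)` for `|ξ| > k`. -/
def g0hat (k : ℝ) (ξ : R2) : ℂ :=
  if ‖ξ‖ < k then Complex.I / ((Real.sqrt (k ^ 2 - ‖ξ‖ ^ 2) : ℝ) : ℂ)
  else 1 / ((Real.sqrt (‖ξ‖ ^ 2 - k ^ 2) : ℝ) : ℂ)

/-- The integrand of the sesquilinear form `B`:
`ĝ₀(ξ) [ (|ξ|²-k²) a₁ b̄₁ - k² a₂ b̄₂ ]` with `a₁ = ξ·Ŵ/|ξ|`, `a₂ = ξ⊥·Ŵ/|ξ|`, etc. -/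
def Bintegrand (k : ℝ) (F1 F2 G1 G2 : R2 → ℂ) (ξ : R2) : ℂ :=
  g0hat k ξ *
    (((‖ξ‖ ^ 2 - k ^ 2 : ℝ) : ℂ) * (dotFt F1 F2 ξ * starRingEnd ℂ (dotFt G1 G2 ξ)) -
      ((k ^ 2 : ℝ) : ℂ) * (curlFt F1 F2 ξ * starRingEnd ℂ (curlFt G1 G2 ξ))) /
    ((‖ξ‖ ^ 2 : ℝ) : ℂ)

/-- The sesquilinear form `B(W,V)`. -/
def Bform (k : ℝ) {Γ : Set R2} (W V : Xelt Γ) : ℂ :=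
  ∫ ξ : R2, Bintegrand k W.c1.ft W.c2.ft V.c1.ft V.c2.ft ξ

/-- The sesquilinear form `E(q,V) = B(curl⃗ q, V)`, where
`curl⃗ q = (∂q/∂x₂, -∂q/∂x₁)` has Fourier transform `(iξ₂ q̂, -iξ₁ q̂)`. -/
def Eform (k : ℝ) {Γ : Set R2} (q : HTildeElt (1/2 : ℝ) Γ) (V : Xelt Γ) : ℂ :=
  ∫ ξ : R2, Bintegrand k (fun η => Complex.I * (η 1 : ℂ) * q.ft η)
      (fun η => -(Complex.I * (η 0 : ℂ) * q.ft η)) V.c1.ft V.c2.ft ξ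

/-- The inner product of the Hilbert space `X`; by the Riesz representation
theorem, every bounded conjugate-linear functional on `X` is `V ↦ Xinner Y V`
for a unique `Y ∈ X`, with functional norm `Xnorm Y`. -/
def Xinner {Γ : Set R2} (Y V : Xelt Γ) : ℂ :=
  ((((2 * π) ^ 2)⁻¹ : ℝ) : ℂ) * ∫ ξ : R2, ((((1 : ℝ) + ‖ξ‖ ^ 2) ^ (-(1/2) : ℝ) : ℝ) : ℂ) *
    (Y.c1.ft ξ * starRingEnd ℂ (V.c1.ft ξ) + Y.c2.ft ξ * starRingEnd ℂ (V.c2.ft ξ) +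
      divFt Y ξ * starRingEnd ℂ (divFt V ξ))

/-- `√(k²-|ξ|²)`, with the branch `i√(|ξ|²-k²)` for `|ξ| > k`. -/
def rootk (k : ℝ) (ξ : R2) : ℂ :=
  if ‖ξ‖ < k then ((Real.sqrt (k ^ 2 - ‖ξ‖ ^ 2) : ℝ) : ℂ)
  else Complex.I * ((Real.sqrt (‖ξ‖ ^ 2 - k ^ 2) : ℝ) : ℂ)

/-- The Fourier multiplier `i/(2√(k²-|ξ|²))` of the Helmholtz single-layer
operator `T` with kernel `e^{ik|x-y|}/(4π|x-y|)`. -/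
def mT (k : ℝ) (ξ : R2) : ℂ := Complex.I / (2 * rootk k ξ)

/-- The Fourier multiplier `1/(2|ξ|)` of the Laplace single-layer operator `T₀`
with kernel `1/(4π|x-y|)`. -/
def mT0 (ξ : R2) : ℂ := 1 / (2 * ((‖ξ‖ : ℝ) : ℂ))

/-- The Fourier multiplier of `R = T - T₀`. -/
def mR (k : ℝ) (ξ : R2) : ℂ := mT k ξ - mT0 ξ

/-- The distributions with Fourier data `G` and `E` have the same restriction to
the open set `Γ`: `⟨G - E, φ⟩ = 0` for all smooth `φ` compactly supported in `Γ`
(pairing written on the Fourier side). -/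
def AgreeOn (Γ : Set R2) (G E : R2 → ℂ) : Prop :=
  ∀ φ : R2 → ℂ, ContDiff ℝ ∞ φ → HasCompactSupport φ → tsupport φ ⊆ Γ →
    (∫ ξ : R2, (G ξ - E ξ) * testFT φ ξ) = 0

/-- The duality pairing `⟨f, ψ⟩` between `H^{1/2}(Γ)` and `H̃^{-1/2}(Γ)`, written
on the Fourier side (Plancherel): `(2π)⁻² ∫ f̂(ξ) conj(ψ̂(ξ)) dξ`, where `G = f̂`
is the Fourier data of (an extension of) `f`. -/
def dualPair (G ψ : R2 → ℂ) : ℂ :=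
  ((((2 * π) ^ 2)⁻¹ : ℝ) : ℂ) * ∫ ξ : R2, G ξ * starRingEnd ℂ (ψ ξ)


open FourierTransform SchwartzMap in
lemma testFT_eq_fourierInv (φ : R2 → ℂ) (w : R2) :
    testFT φ ((2 * π) • w) = 𝓕⁻ φ w := by
  rw [Real.fourierInv_eq']
  unfold testFT
  congr 1
  ext x
  rw [smul_eq_mul]
  congr 2
  simp [rdot, PiLp.inner_apply, Fin.sum_univ_two]
  ring

/-- Embedding real test functions in Schwartz functions. -/
def toSch (g : R2 → ℝ) (h1 : ContDiff ℝ ∞ g) (h2 : HasCompactSupport g) : SchwartzMap R2 ℂ :=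
  HasCompactSupport.toSchwartzMap (f := Complex.ofRealCLM ∘ g) (h2.comp_left rfl) (by fun_prop)

open FourierTransform SchwartzMap in
lemma parseval_inv (G : Lp (α := R2) ℂ 2) (ψ : SchwartzMap R2 ℂ) :
    ∫ x, ψ x * (𝓕⁻ G : Lp (α := R2) ℂ 2) x = ∫ x, (𝓕⁻ (ψ : R2 → ℂ)) x * G x := by
  have h := congrArg (fun T => T ψ) (Lp.fourierInv_toTemperedDistribution_eq G)
  simp only [TemperedDistribution.fourierInv_apply, Lp.toTemperedDistribution_apply] at h
  simpa [SchwartzMap.fourierInv_coe] using h.symm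

open FourierTransform SchwartzMap in
lemma parseval (G : Lp (α := R2) ℂ 2) (ψ : SchwartzMap R2 ℂ) :
    ∫ x, ψ x * (𝓕 G : Lp (α := R2) ℂ 2) x = ∫ x, (𝓕 (ψ : R2 → ℂ)) x * G x := by
  have h := congrArg (fun T => T ψ) (Lp.fourier_toTemperedDistribution_eq G)
  simp only [TemperedDistribution.fourier_apply, Lp.toTemperedDistribution_apply] at h
  simpa [SchwartzMap.fourier_coe] using h.symm

lemma weak_cpt (f : ℕ → Lp (α := R2) ℂ 2) (C : ℝ) (hC : ∀ n, ‖f n‖ ≤ C) :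
    ∃ φ : ℕ → ℕ, StrictMono φ ∧ ∃ g : Lp (α := R2) ℂ 2, ∀ h : Lp (α := R2) ℂ 2,
      Tendsto (fun n => inner ℂ (f (φ n)) h) atTop (𝓝 (inner ℂ g h)) := by
  have : Fact ((2 : ENNReal) ≠ ⊤) := ⟨by simp⟩
  let H := Lp (α := R2) ℂ 2
  let x : ℕ → WeakDual ℂ H := fun n =>
    StrongDual.toWeakDual (InnerProductSpace.toDual ℂ H (f n))
  have := WeakDual.isSeqCompact_closedBall ℂ H (0 : StrongDual ℂ H) C
  obtain ⟨a, -, φ, hφ, hlim⟩ := this (x := x) (fun n => by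
    simpa [x] using hC n)
  refine ⟨φ, hφ, (InnerProductSpace.toDual ℂ H).symm (WeakDual.toStrongDual a), fun h => ?_⟩
  have h2 := ((WeakDual.eval_continuous (𝕜 := ℂ) h).tendsto a).comp hlim
  have h3 : (inner ℂ ((InnerProductSpace.toDual ℂ H).symm (WeakDual.toStrongDual a)) h : ℂ) = a h := by
    rw [InnerProductSpace.toDual_symm_apply]; rfl
  rw [h3]
  exact h2
open FourierTransform SchwartzMap

lemma exists_repr {K : Set R2} (hK : IsCompact K) (F : R2 → ℂ) (hF : Continuous F)
    (hF2 : Integrable (fun ξ => ‖F ξ‖ ^ 2))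
    (hs : ∀ φ : R2 → ℂ, ContDiff ℝ ∞ φ → HasCompactSupport φ →
      tsupport φ ∩ K = ∅ → (∫ ξ : R2, F ξ * testFT φ ξ) = 0) :
    ∃ f : Lp (α := R2) ℂ 2, ‖f‖ ^ 2 ≤ ((2 * π) ^ 2)⁻¹ * ∫ ξ, ‖F ξ‖ ^ 2 ∧
      ∀ ξ, F ξ = 𝓕 (K.indicator f) ((2 * π)⁻¹ • ξ) := by
  have hpi : (0:ℝ) < 2 * π := by positivity
  set Ft : R2 → ℂ := fun w => F ((2 * π) • w) with hFt
  have hFtc : Continuous Ft := by fun_prop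
  have hFt2 : MemLp Ft 2 volume := by
    rw [memLp_two_iff_integrable_sq_norm hFtc.aestronglyMeasurable]
    exact (integrable_comp_smul_iff volume (fun ξ => ‖F ξ‖ ^ 2) hpi.ne').2 hF2
  set G : Lp (α := R2) ℂ 2 := hFt2.toLp Ft with hG
  have hGae : G =ᵐ[volume] Ft := hFt2.coeFn_toLp
  set f : Lp ℂ 2 (volume : Measure R2) := 𝓕⁻ G with hf
  have hfG : 𝓕 f = G := fourier_fourierInv_eq G
  have hnorm : ‖f‖ = ‖G‖ := by rw [← hfG, Lp.norm_fourier_eq]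
  have hloc : LocallyIntegrable f volume := (Lp.memLp f).locallyIntegrable (by norm_num)
  have hfr : Module.finrank ℝ R2 = 2 := by simp
  have hz : ∀ᵐ x ∂(volume : Measure R2), x ∈ Kᶜ → f x = 0 := by
    refine hK.isClosed.isOpen_compl.ae_eq_zero_of_integral_contDiff_smul_eq_zero
      (hloc.locallyIntegrableOn _) ?_
    intro g g1 g2 g3
    have h1 := parseval_inv G (toSch g g1 g2)
    have h2 : ∫ x, (𝓕⁻ ((toSch g g1 g2 : SchwartzMap R2 ℂ) : R2 → ℂ)) x * G x = 0 := by
      have : ∫ x, (𝓕⁻ ((toSch g g1 g2 : SchwartzMap R2 ℂ) : R2 → ℂ)) x * G x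
          = ∫ x : R2, (fun ξ => F ξ * testFT (toSch g g1 g2) ξ) ((2 * π) • x) := by
        apply integral_congr_ae
        filter_upwards [hGae] with x hx
        rw [hx, ← testFT_eq_fourierInv, mul_comm]
      rw [this, Measure.integral_comp_smul volume (fun ξ => F ξ * testFT (toSch g g1 g2) ξ), hs _ (SchwartzMap.smooth _ _), smul_zero]
      · exact g2.comp_left (g := Complex.ofRealCLM) (map_zero _)
      · have hsub : tsupport (toSch g g1 g2) ⊆ tsupport g := by
          apply closure_mono
          intro x hx
          simp only [Function.mem_support] at hx ⊢
          intro h0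
          apply hx
          simp [toSch, h0]
        rw [← Set.disjoint_iff_inter_eq_empty]
        exact (Set.disjoint_compl_left_iff_subset.2 subset_rfl).mono_left (hsub.trans g3)
    rw [h2] at h1
    rw [← h1]
    rfl
  have hind : K.indicator f =ᵐ[volume] f := by
    filter_upwards [hz] with x hx
    by_cases hxK : x ∈ K
    · simp [hxK]
    · simp [hxK, hx hxK]
  have hfint : Integrable (K.indicator f) volume := by
    rw [integrable_indicator_iff hK.measurableSet]
    exact hloc.integrableOn_isCompact hK
  have hcont : Continuous (𝓕 (K.indicator (f : R2 → ℂ))) :=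
    VectorFourier.fourierIntegral_continuous Real.continuous_fourierChar
      (by exact continuous_inner) hfint
  have hae : ∀ᵐ x ∂(volume : Measure R2), Ft x = 𝓕 (K.indicator (f : R2 → ℂ)) x := by
    apply ae_eq_of_integral_contDiff_smul_eq hFtc.locallyIntegrable hcont.locallyIntegrable
    intro g g1 g2
    have h1 := parseval f (toSch g g1 g2)
    rw [hfG] at h1
    have h2 : ∫ x, g x • Ft x = ∫ x, (toSch g g1 g2) x * G x := by
      apply integral_congr_ae
      filter_upwards [hGae] with x hx
      rw [hx]; rfl
    rw [h2, h1]
    have h3 : ∫ x, (𝓕 (K.indicator (f : R2 → ℂ))) x • (toSch g g1 g2) x =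
        ∫ x, (K.indicator (f : R2 → ℂ)) x • (𝓕 (toSch g g1 g2 : R2 → ℂ)) x := by
      have := VectorFourier.integral_fourierIntegral_smul_eq_flip (μ := volume) (ν := volume)
        (L := innerₗ R2) Real.continuous_fourierChar (by exact continuous_inner) hfint
        (toSch g g1 g2).integrable
      rwa [flip_innerₗ] at this
    have h4 : ∫ x, g x • (𝓕 (K.indicator (f : R2 → ℂ))) x =
      ∫ x, (𝓕 (K.indicator (f : R2 → ℂ))) x • (toSch g g1 g2) x := by
      congr 1
      ext x
      rw [smul_eq_mul, mul_comm]; rfl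
    rw [h4, h3]
    apply integral_congr_ae
    filter_upwards [hind] with x hx
    rw [hx, smul_eq_mul, mul_comm]
  have heq : Ft = 𝓕 (K.indicator (f : R2 → ℂ)) := (hFtc.ae_eq_iff_eq volume hcont).1 hae
  refine ⟨f, ?_, fun ξ => ?_⟩
  · rw [hnorm]
    have h1 : ‖G‖ ^ 2 = ∫ x, ‖Ft x‖ ^ 2 := by
      have : (inner ℂ G G : ℂ) = ((∫ x, ‖Ft x‖ ^ 2 : ℝ) : ℂ) := by
        rw [L2.inner_def, ← integral_complex_ofReal]
        apply integral_congr_ae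
        filter_upwards [hGae] with x hx
        rw [hx, inner_self_eq_norm_sq_to_K]; simp
      rw [inner_self_eq_norm_sq_to_K] at this
      rw [← Complex.ofReal_inj, ← this]; simp
    rw [h1, hFt, Measure.integral_comp_smul volume (fun ξ => ‖F ξ‖ ^ 2), hfr, smul_eq_mul,
      abs_of_pos (by positivity)]
  · rw [← heq, hFt]
    simp only [smul_smul]
    rw [mul_inv_cancel₀ hpi.ne', one_smul]

lemma cont_repr {K : Set R2} (hK : IsCompact K) (f : Lp (α := R2) ℂ 2) :
    Continuous (fun ξ => 𝓕 (K.indicator (f : R2 → ℂ)) ((2 * π)⁻¹ • ξ)) := by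
  have hloc : LocallyIntegrable f volume := (Lp.memLp f).locallyIntegrable (by norm_num)
  have hfint : Integrable (K.indicator f) volume := by
    rw [integrable_indicator_iff hK.measurableSet]
    exact hloc.integrableOn_isCompact hK
  have hcont : Continuous (𝓕 (K.indicator (f : R2 → ℂ))) :=
    VectorFourier.fourierIntegral_continuous Real.continuous_fourierChar
      (by exact continuous_inner) hfint
  fun_prop

lemma exists_kernel {K : Set R2} (hK : IsCompact K) : ∃ C : ℝ, 0 ≤ C ∧ ∀ w : R2,
    ∃ e : Lp (α := R2) ℂ 2, ‖e‖ ≤ C ∧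
      ∀ f : Lp (α := R2) ℂ 2, 𝓕 (K.indicator (f : R2 → ℂ)) w = inner ℂ e f := by
  refine ⟨((volume K) ^ (1/2:ℝ)).toReal, by positivity, fun w => ?_⟩
  set E : R2 → ℂ := K.indicator (fun v => (Real.fourierChar (inner ℝ v w) : ℂ)) with hE
  have hEc : Continuous (fun v : R2 => (Real.fourierChar (inner ℝ v w) : ℂ)) := by
    have := Real.continuous_fourierChar
    fun_prop
  have hm : MemLp (K.indicator (fun _ => (1:ℂ))) 2 (volume : Measure R2) :=
    memLp_indicator_const 2 hK.measurableSet 1 (Or.inr hK.measure_lt_top.ne)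
  have hEn : ∀ x, ‖E x‖ = ‖K.indicator (fun _ => (1:ℂ)) x‖ := by
    intro x
    by_cases hx : x ∈ K <;> simp [hE, hx, Circle.norm_coe]
  have hEm : MemLp E 2 (volume : Measure R2) :=
    hm.of_le (hEc.aestronglyMeasurable.indicator hK.measurableSet)
      (Eventually.of_forall fun x => (hEn x).le)
  refine ⟨hEm.toLp E, ?_, fun f => ?_⟩
  · rw [Lp.norm_toLp, eLpNorm_congr_norm_ae (Eventually.of_forall hEn),
      eLpNorm_indicator_const hK.measurableSet (by norm_num) (by norm_num)]
    simp
  · rw [L2.inner_def, Real.fourier_eq]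
    apply integral_congr_ae
    filter_upwards [hEm.coeFn_toLp] with x hx
    rw [hx]
    by_cases hxK : x ∈ K
    · simp [hE, hxK, Circle.smul_def, mul_comm, AddChar.map_neg_eq_inv]
    · simp [hE, hxK]

lemma fatou_int (h : ℕ → R2 → ℝ) (hl : R2 → ℝ) (D : ℝ) (h0 : ∀ n x, 0 ≤ h n x)
    (hi : ∀ n, Integrable (h n)) (hD : ∀ n, ∫ x, h n x ≤ D)
    (hm : AEStronglyMeasurable hl volume)
    (hlim : ∀ x, Tendsto (fun n => h n x) atTop (𝓝 (hl x))) :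
    Integrable hl ∧ ∫ x, hl x ≤ D := by
  have hl0 : ∀ x, 0 ≤ hl x := fun x => ge_of_tendsto' (hlim x) (fun n => h0 n x)
  have hD0 : 0 ≤ D := (integral_nonneg (h0 0)).trans (hD 0)
  have key : ∫⁻ x, ENNReal.ofReal (hl x) ≤ ENNReal.ofReal D := by
    have e : ∀ x, ENNReal.ofReal (hl x) = liminf (fun n => ENNReal.ofReal (h n x)) atTop :=
      fun x => ((ENNReal.continuous_ofReal.tendsto _).comp (hlim x)).liminf_eq.symm
    simp_rw [e]
    refine (lintegral_liminf_le' fun n => (hi n).aestronglyMeasurable.aemeasurable.ennreal_ofReal).trans ?_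
    refine liminf_le_of_le (by isBoundedDefault) fun b hb => ?_
    obtain ⟨n, hn⟩ := hb.exists
    refine hn.trans ?_
    rw [← ofReal_integral_eq_lintegral_ofReal (hi n) (Eventually.of_forall (h0 n))]
    exact ENNReal.ofReal_le_ofReal (hD n)
  have hfint : Integrable hl :=
    (lintegral_ofReal_ne_top_iff_integrable hm (Eventually.of_forall hl0)).1
      (key.trans_lt ENNReal.ofReal_lt_top).ne
  refine ⟨hfint, ?_⟩
  rw [← ofReal_integral_eq_lintegral_ofReal hfint (Eventually.of_forall hl0)] at key
  exact (ENNReal.ofReal_le_ofReal_iff hD0).1 key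

lemma wt_cont (s : ℝ) : Continuous (fun ξ : R2 => ((1 : ℝ) + ‖ξ‖ ^ 2) ^ s) := by
  apply Continuous.rpow_const (by fun_prop)
  intro x
  left
  positivity

lemma wt_rel (ξ : R2) : ((1 : ℝ) + ‖ξ‖ ^ 2) ^ (1/2 : ℝ) =
    (1 + ‖ξ‖ ^ 2) * ((1 : ℝ) + ‖ξ‖ ^ 2) ^ (-(1/2) : ℝ) := by
  have h : (0:ℝ) < 1 + ‖ξ‖ ^ 2 := by positivity
  nth_rewrite 2 [← Real.rpow_one (1 + ‖ξ‖ ^ 2)]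
  rw [← Real.rpow_add h]
  norm_num

lemma wt_le (ξ : R2) : ((1 : ℝ) + ‖ξ‖ ^ 2) ^ (-(1/2) : ℝ) ≤ 1 :=
  Real.rpow_le_one_of_one_le_of_nonpos (by nlinarith [sq_nonneg ‖ξ‖]) (by norm_num)

lemma wt_ge (ξ : R2) : 1 ≤ ((1 : ℝ) + ‖ξ‖ ^ 2) ^ (1/2 : ℝ) :=
  Real.one_le_rpow (by nlinarith [sq_nonneg ‖ξ‖]) (by norm_num)

lemma wt_nonneg (s : ℝ) (ξ : R2) : 0 ≤ ((1 : ℝ) + ‖ξ‖ ^ 2) ^ s := by positivity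

lemma conv_aux (g : ℕ → R2 → ℝ) (B D : ℝ) (hc : ∀ n, Continuous (g n))
    (h0 : ∀ n x, 0 ≤ g n x) (hB : ∀ n x, g n x ≤ B)
    (hlim : ∀ x, Tendsto (fun n => g n x) atTop (𝓝 0))
    (hi : ∀ n, Integrable (fun ξ => ((1 : ℝ) + ‖ξ‖ ^ 2) ^ (1/2 : ℝ) * g n ξ))
    (hD : ∀ n, ∫ ξ, ((1 : ℝ) + ‖ξ‖ ^ 2) ^ (1/2 : ℝ) * g n ξ ≤ D) :
    Tendsto (fun n => ∫ ξ, ((1 : ℝ) + ‖ξ‖ ^ 2) ^ (-(1/2) : ℝ) * g n ξ) atTop (𝓝 0) := by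
  have hD0 : 0 ≤ D := (integral_nonneg (fun ξ => mul_nonneg (wt_nonneg _ ξ) (h0 0 ξ))).trans (hD 0)
  have hball : ∀ R : ℝ, Tendsto (fun n => ∫ ξ in Metric.closedBall (0:R2) R,
      ((1 : ℝ) + ‖ξ‖ ^ 2) ^ (-(1/2) : ℝ) * g n ξ) atTop (𝓝 0) := by
    intro R
    have := tendsto_integral_of_dominated_convergence
      (μ := volume.restrict (Metric.closedBall (0:R2) R))
      (F := fun n ξ => ((1 : ℝ) + ‖ξ‖ ^ 2) ^ (-(1/2) : ℝ) * g n ξ) (f := fun _ => (0:ℝ))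
      (fun _ => B) (fun n => ((wt_cont _).mul (hc n)).aestronglyMeasurable)
      (by
        have : IsFiniteMeasure (volume.restrict (Metric.closedBall (0:R2) R)) :=
          ⟨by
            rw [Measure.restrict_apply_univ]
            exact (isCompact_closedBall (0:R2) R).measure_lt_top⟩
        exact integrable_const _)
      (fun n => Eventually.of_forall fun ξ => by
        rw [Real.norm_of_nonneg (mul_nonneg (wt_nonneg _ ξ) (h0 n ξ))]
        calc _ ≤ 1 * g n ξ := mul_le_mul_of_nonneg_right (wt_le ξ) (h0 n ξ)
          _ ≤ B := by rw [one_mul]; exact hB n ξ)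
      (Eventually.of_forall fun ξ => by simpa using (hlim ξ).const_mul _)
    simpa using this
  have hpt : ∀ (R : ℝ), 0 ≤ R → ∀ n ξ, ((1 : ℝ) + ‖ξ‖ ^ 2) ^ (-(1/2) : ℝ) * g n ξ ≤
      (Metric.closedBall (0:R2) R).indicator
        (fun ξ => ((1 : ℝ) + ‖ξ‖ ^ 2) ^ (-(1/2) : ℝ) * g n ξ) ξ +
      (1 + R ^ 2)⁻¹ * (((1 : ℝ) + ‖ξ‖ ^ 2) ^ (1/2 : ℝ) * g n ξ) := by
    intro R hR n ξ
    have hq := mul_nonneg (wt_nonneg (-(1/2)) ξ) (h0 n ξ)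
    by_cases hx : ξ ∈ Metric.closedBall (0:R2) R
    · rw [Set.indicator_of_mem hx]
      have := mul_nonneg (wt_nonneg (1/2) ξ) (h0 n ξ)
      have : 0 ≤ (1 + R ^ 2)⁻¹ * (((1 : ℝ) + ‖ξ‖ ^ 2) ^ (1/2 : ℝ) * g n ξ) := by positivity
      linarith
    · rw [Set.indicator_of_notMem hx, zero_add, wt_rel, mul_assoc, ← mul_assoc]
      have : R < ‖ξ‖ := by simpa using hx
      apply le_mul_of_one_le_left hq
      rw [inv_mul_eq_div, one_le_div (by positivity)]
      gcongr
  have hqi : ∀ n, Integrable (fun ξ => ((1 : ℝ) + ‖ξ‖ ^ 2) ^ (-(1/2) : ℝ) * g n ξ) := by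
    intro n
    refine (hi n).mono' ((wt_cont _).mul (hc n)).aestronglyMeasurable
      (Eventually.of_forall fun ξ => ?_)
    rw [Real.norm_of_nonneg (mul_nonneg (wt_nonneg _ ξ) (h0 n ξ))]
    exact mul_le_mul_of_nonneg_right ((wt_le ξ).trans (wt_ge ξ)) (h0 n ξ)
  rw [Metric.tendsto_atTop]
  intro ε hε
  obtain ⟨R, hR0, hR⟩ : ∃ R : ℝ, 0 ≤ R ∧ (1 + R ^ 2)⁻¹ * D ≤ ε / 2 := by
    refine ⟨2 * D / ε + 1, by positivity, ?_⟩
    rw [inv_mul_le_iff₀ (by positivity)]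
    have h1 : 2 * D / ε ≤ 1 + (2 * D / ε + 1) ^ 2 := by
      have : 0 ≤ 2 * D / ε := by positivity
      nlinarith
    calc D = (2 * D / ε) * (ε / 2) := by field_simp
      _ ≤ _ := by gcongr
  obtain ⟨N, hN⟩ := (Metric.tendsto_atTop.1 (hball R)) (ε/2) (by positivity)
  refine ⟨N, fun n hn => ?_⟩
  have h1 := hN n hn
  rw [Real.dist_eq, sub_zero] at h1 ⊢
  rw [abs_of_nonneg (integral_nonneg fun ξ => mul_nonneg (wt_nonneg _ ξ) (h0 n ξ))]
  have hi1 := (hqi n).indicator (s := Metric.closedBall (0:R2) R) Metric.isClosed_closedBall.measurableSet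
  have h2 := integral_mono (hqi n) (hi1.add ((hi n).const_mul (1 + R ^ 2)⁻¹)) (hpt R hR0 n)
  simp only [Pi.add_apply] at h2
  rw [integral_add hi1 ((hi n).const_mul (1 + R ^ 2)⁻¹), integral_const_mul,
    integral_indicator Metric.isClosed_closedBall.measurableSet] at h2
  have h3 : (1 + R ^ 2)⁻¹ * ∫ ξ, ((1 : ℝ) + ‖ξ‖ ^ 2) ^ (1/2 : ℝ) * g n ξ ≤ (1 + R ^ 2)⁻¹ * D :=
    mul_le_mul_of_nonneg_left (hD n) (by positivity)
  have h4 := le_abs_self (∫ ξ in Metric.closedBall (0:R2) R,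
      ((1 : ℝ) + ‖ξ‖ ^ 2) ^ (-(1/2) : ℝ) * g n ξ)
  linarith

lemma testFT_integrable (φ : R2 → ℂ) (h1 : ContDiff ℝ ∞ φ) (h2 : HasCompactSupport φ) :
    Integrable (testFT φ) := by
  rw [← integrable_comp_smul_iff volume (testFT φ) (R := 2 * π) (by positivity)]
  simp_rw [testFT_eq_fourierInv]
  have := (𝓕⁻ (h2.toSchwartzMap h1)).integrable (μ := volume)
  rwa [SchwartzMap.fourierInv_coe] at this

lemma component {Γ : Set R2} (hΓ : Bornology.IsBounded Γ)
    (V : ℕ → HTildeElt (-(1/2) : ℝ) Γ) (D : ℝ)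
    (hi : ∀ n, Integrable (fun ξ => ((1 : ℝ) + ‖ξ‖ ^ 2) ^ (1/2 : ℝ) * ‖(V n).ft ξ‖ ^ 2))
    (hD : ∀ n, ∫ ξ, ((1 : ℝ) + ‖ξ‖ ^ 2) ^ (1/2 : ℝ) * ‖(V n).ft ξ‖ ^ 2 ≤ D) :
    ∃ φ : ℕ → ℕ, StrictMono φ ∧ ∃ L : HTildeElt (-(1/2) : ℝ) Γ,
      Tendsto (fun n => wnormSq (-(1/2)) (fun ξ => (V (φ n)).ft ξ - L.ft ξ)) atTop (𝓝 0) := by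
  have hK : IsCompact (closure Γ) := hΓ.isCompact_closure
  have hsq : ∀ n ξ, ‖(V n).ft ξ‖ ^ 2 ≤ ((1 : ℝ) + ‖ξ‖ ^ 2) ^ (1/2 : ℝ) * ‖(V n).ft ξ‖ ^ 2 :=
    fun n ξ => le_mul_of_one_le_left (by positivity) (wt_ge ξ)
  have hi2 : ∀ n, Integrable (fun ξ => ‖(V n).ft ξ‖ ^ 2) := fun n =>
    (hi n).mono' ((V n).cont.norm.pow 2).aestronglyMeasurable
      (Eventually.of_forall fun ξ => by
        rw [Real.norm_of_nonneg (by positivity)]; exact hsq n ξ)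
  have hI : ∀ n, ∫ ξ, ‖(V n).ft ξ‖ ^ 2 ≤ D := fun n =>
    (integral_mono (hi2 n) (hi n) (hsq n)).trans (hD n)
  choose f hf1 hf2 using fun n => exists_repr hK (V n).ft (V n).cont (hi2 n) (V n).supp
  set A : ℝ := Real.sqrt (((2 * π) ^ 2)⁻¹ * D) with hA
  have hfA : ∀ n, ‖f n‖ ≤ A := fun n => Real.le_sqrt_of_sq_le
    ((hf1 n).trans (mul_le_mul_of_nonneg_left (hI n) (by positivity)))
  obtain ⟨φ, hφ, g, hg⟩ := weak_cpt f A hfA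
  obtain ⟨C, hC0, hC⟩ := exists_kernel hK
  set L : R2 → ℂ := fun ξ => 𝓕 ((closure Γ).indicator (g : R2 → ℂ)) ((2 * π)⁻¹ • ξ) with hL
  have hLc : Continuous L := cont_repr hK g
  have hlim : ∀ ξ, Tendsto (fun n => (V (φ n)).ft ξ) atTop (𝓝 (L ξ)) := by
    intro ξ
    obtain ⟨e, -, he⟩ := hC ((2 * π)⁻¹ • ξ)
    have := (Complex.continuous_conj.tendsto _).comp (hg e)
    simp only [hL, hf2, he]
    simpa [Function.comp_def] using this
  have hbd : ∀ n ξ, ‖(V n).ft ξ‖ ≤ C * A := by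
    intro n ξ
    obtain ⟨e, he1, he⟩ := hC ((2 * π)⁻¹ • ξ)
    rw [hf2, he]
    exact (norm_inner_le_norm _ _).trans (by gcongr; exact hfA n)
  have hLbd : ∀ ξ, ‖L ξ‖ ≤ C * A := fun ξ =>
    le_of_tendsto' (hlim ξ).norm (fun n => hbd _ ξ)
  obtain ⟨hLi, hLD⟩ := fatou_int
    (fun n ξ => ((1 : ℝ) + ‖ξ‖ ^ 2) ^ (1/2 : ℝ) * ‖(V (φ n)).ft ξ‖ ^ 2)
    (fun ξ => ((1 : ℝ) + ‖ξ‖ ^ 2) ^ (1/2 : ℝ) * ‖L ξ‖ ^ 2) D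
    (fun n ξ => by positivity) (fun n => hi _) (fun n => hD _)
    ((wt_cont _).mul (hLc.norm.pow 2)).aestronglyMeasurable
    (fun ξ => ((hlim ξ).norm.pow 2).const_mul _)
  have hLi' : Integrable (fun ξ => ((1 : ℝ) + ‖ξ‖ ^ 2) ^ (-(1/2) : ℝ) * ‖L ξ‖ ^ 2) :=
    hLi.mono' ((wt_cont _).mul (hLc.norm.pow 2)).aestronglyMeasurable
      (Eventually.of_forall fun ξ => by
        rw [Real.norm_of_nonneg (by positivity)]
        exact mul_le_mul_of_nonneg_right ((wt_le ξ).trans (wt_ge ξ)) (by positivity))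
  have hLs : ∀ ψ : R2 → ℂ, ContDiff ℝ ∞ ψ → HasCompactSupport ψ →
      tsupport ψ ∩ closure Γ = ∅ → (∫ ξ : R2, L ξ * testFT ψ ξ) = 0 := by
    intro ψ h1 h2 h3
    have hti := testFT_integrable ψ h1 h2
    have := tendsto_integral_of_dominated_convergence (μ := volume)
      (F := fun n ξ => (V (φ n)).ft ξ * testFT ψ ξ) (f := fun ξ => L ξ * testFT ψ ξ)
      (fun ξ => C * A * ‖testFT ψ ξ‖)
      (fun n => (V (φ n)).cont.aestronglyMeasurable.mul hti.aestronglyMeasurable)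
      (hti.norm.const_mul _)
      (fun n => Eventually.of_forall fun ξ => by
        rw [norm_mul]; exact mul_le_mul_of_nonneg_right (hbd _ ξ) (norm_nonneg _))
      (Eventually.of_forall fun ξ => (hlim ξ).mul_const _)
    simp_rw [(V _).supp ψ h1 h2 h3] at this
    exact tendsto_nhds_unique this tendsto_const_nhds
  refine ⟨φ, hφ, ⟨L, hLc, hLi', hLs⟩, ?_⟩
  have hpar : ∀ n ξ, ‖(V (φ n)).ft ξ - L ξ‖ ^ 2 ≤
      2 * ‖(V (φ n)).ft ξ‖ ^ 2 + 2 * ‖L ξ‖ ^ 2 := by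
    intro n ξ
    have h1 := norm_sub_le ((V (φ n)).ft ξ) (L ξ)
    have h2 := norm_nonneg ((V (φ n)).ft ξ - L ξ)
    nlinarith [sq_nonneg (‖(V (φ n)).ft ξ‖ - ‖L ξ‖)]
  have hpar2 : ∀ n ξ, ((1 : ℝ) + ‖ξ‖ ^ 2) ^ (1/2 : ℝ) * ‖(V (φ n)).ft ξ - L ξ‖ ^ 2 ≤
      2 * (((1 : ℝ) + ‖ξ‖ ^ 2) ^ (1/2 : ℝ) * ‖(V (φ n)).ft ξ‖ ^ 2) +
      2 * (((1 : ℝ) + ‖ξ‖ ^ 2) ^ (1/2 : ℝ) * ‖L ξ‖ ^ 2) := by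
    intro n ξ
    have := mul_le_mul_of_nonneg_left (hpar n ξ) (wt_nonneg (1/2) ξ)
    linarith
  have hbi : ∀ n, Integrable (fun ξ => 2 * (((1 : ℝ) + ‖ξ‖ ^ 2) ^ (1/2 : ℝ) * ‖(V (φ n)).ft ξ‖ ^ 2) +
      2 * (((1 : ℝ) + ‖ξ‖ ^ 2) ^ (1/2 : ℝ) * ‖L ξ‖ ^ 2)) := fun n =>
    ((hi _).const_mul 2).add (hLi.const_mul 2)
  have hdc : ∀ n, Continuous (fun ξ => ‖(V (φ n)).ft ξ - L ξ‖ ^ 2) := fun n =>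
    ((V (φ n)).cont.sub hLc).norm.pow 2
  have hdi : ∀ n, Integrable (fun ξ =>
      ((1 : ℝ) + ‖ξ‖ ^ 2) ^ (1/2 : ℝ) * ‖(V (φ n)).ft ξ - L ξ‖ ^ 2) := fun n =>
    (hbi n).mono' ((wt_cont _).mul (hdc n)).aestronglyMeasurable
      (Eventually.of_forall fun ξ => by
        rw [Real.norm_of_nonneg (by positivity)]; exact hpar2 n ξ)
  have := conv_aux (fun n ξ => ‖(V (φ n)).ft ξ - L ξ‖ ^ 2) (4 * (C * A) ^ 2) (4 * D) hdc
    (fun n ξ => by positivity)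
    (fun n ξ => by
      have h1 := pow_le_pow_left₀ (norm_nonneg _) (hbd (φ n) ξ) 2
      have h2 := pow_le_pow_left₀ (norm_nonneg _) (hLbd ξ) 2
      linarith [hpar n ξ])
    (fun ξ => by simpa using (((hlim ξ).sub_const (L ξ)).norm.pow 2))
    hdi
    (fun n => by
      have := integral_mono (hdi n) (hbi n) (hpar2 n)
      rw [integral_add ((hi _).const_mul 2) (hLi.const_mul 2), integral_const_mul,
        integral_const_mul] at this
      linarith [hD (φ n)])
  simpa [wnormSq] using this.const_mul (((2 * π) ^ 2)⁻¹)
/-- the space `H̃^{-1/2}_div(Γ) ∩ H̃^{-1/2}_curl(Γ)` is compactly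
embedded in `H`: every sequence of vector fields with components in `H̃^{-1/2}(Γ)`,
with distributional divergence and scalar curl in `H̃^{-1/2}(Γ)`, bounded in the
combined norm, has a subsequence converging in the norm of `H` to an element of `H`. -/
theorem statement6 (Γ : Set R2) (hΓ : IsLipschitzDomain Γ)
    (V1 V2 : ℕ → HTildeElt (-(1/2) : ℝ) Γ)
    (hdiv : ∀ n, Integrable (fun ξ : R2 =>
      ((1 : ℝ) + ‖ξ‖ ^ 2) ^ (-(1/2) : ℝ) * ‖dotFt (V1 n).ft (V2 n).ft ξ‖ ^ 2) volume)
    (hcurl : ∀ n, Integrable (fun ξ : R2 =>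
      ((1 : ℝ) + ‖ξ‖ ^ 2) ^ (-(1/2) : ℝ) * ‖curlFt (V1 n).ft (V2 n).ft ξ‖ ^ 2) volume)
    (M : ℝ)
    (hbdd : ∀ n, wnormSq (-(1/2)) (V1 n).ft + wnormSq (-(1/2)) (V2 n).ft +
      wnormSq (-(1/2)) (dotFt (V1 n).ft (V2 n).ft) +
      wnormSq (-(1/2)) (curlFt (V1 n).ft (V2 n).ft) ≤ M) :
    ∃ φ : ℕ → ℕ, StrictMono φ ∧ ∃ L1 L2 : HTildeElt (-(1/2) : ℝ) Γ,
      Tendsto (fun n =>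
          wnormSq (-(1/2)) (fun ξ => (V1 (φ n)).ft ξ - L1.ft ξ) +
          wnormSq (-(1/2)) (fun ξ => (V2 (φ n)).ft ξ - L2.ft ξ))
        atTop (𝓝 0) := by

  have hpi : (0:ℝ) < ((2 * π) ^ 2)⁻¹ := by positivity
  have hid : ∀ n ξ, ‖dotFt (V1 n).ft (V2 n).ft ξ‖ ^ 2 + ‖curlFt (V1 n).ft (V2 n).ft ξ‖ ^ 2 =
      ‖ξ‖ ^ 2 * (‖(V1 n).ft ξ‖ ^ 2 + ‖(V2 n).ft ξ‖ ^ 2) := by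
    intro n ξ
    rw [EuclideanSpace.real_norm_sq_eq, Fin.sum_univ_two]
    simp only [dotFt, curlFt, ← Complex.normSq_eq_norm_sq, Complex.normSq_apply]
    simp
    ring
  have htot : ∀ n ξ, ((1 : ℝ) + ‖ξ‖ ^ 2) ^ (-(1/2) : ℝ) * ‖(V1 n).ft ξ‖ ^ 2 +
      ((1 : ℝ) + ‖ξ‖ ^ 2) ^ (-(1/2) : ℝ) * ‖(V2 n).ft ξ‖ ^ 2 +
      ((1 : ℝ) + ‖ξ‖ ^ 2) ^ (-(1/2) : ℝ) * ‖dotFt (V1 n).ft (V2 n).ft ξ‖ ^ 2 +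
      ((1 : ℝ) + ‖ξ‖ ^ 2) ^ (-(1/2) : ℝ) * ‖curlFt (V1 n).ft (V2 n).ft ξ‖ ^ 2 =
      ((1 : ℝ) + ‖ξ‖ ^ 2) ^ (1/2 : ℝ) * ‖(V1 n).ft ξ‖ ^ 2 +
      ((1 : ℝ) + ‖ξ‖ ^ 2) ^ (1/2 : ℝ) * ‖(V2 n).ft ξ‖ ^ 2 := by
    intro n ξ
    rw [wt_rel]
    linear_combination (((1 : ℝ) + ‖ξ‖ ^ 2) ^ (-(1/2) : ℝ)) * hid n ξ
  have hti : ∀ n, Integrable (fun ξ => ((1 : ℝ) + ‖ξ‖ ^ 2) ^ (1/2 : ℝ) * ‖(V1 n).ft ξ‖ ^ 2 +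
      ((1 : ℝ) + ‖ξ‖ ^ 2) ^ (1/2 : ℝ) * ‖(V2 n).ft ξ‖ ^ 2) := by
    intro n
    simp_rw [← htot]
    exact (((V1 n).mem.add (V2 n).mem).add (hdiv n)).add (hcurl n)
  have htD : ∀ n, ∫ ξ, (((1 : ℝ) + ‖ξ‖ ^ 2) ^ (1/2 : ℝ) * ‖(V1 n).ft ξ‖ ^ 2 +
      ((1 : ℝ) + ‖ξ‖ ^ 2) ^ (1/2 : ℝ) * ‖(V2 n).ft ξ‖ ^ 2) ≤ (2 * π) ^ 2 * M := by
    intro n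
    simp_rw [← htot]
    have a1 := integral_add (((V1 n).mem.add (V2 n).mem).add (hdiv n)) (hcurl n)
    have a2 := integral_add ((V1 n).mem.add (V2 n).mem) (hdiv n)
    have a3 := integral_add (V1 n).mem (V2 n).mem
    simp only [Pi.add_apply] at a1 a2 a3
    rw [a1, a2, a3, ← inv_mul_le_iff₀ (by positivity)]
    have := hbdd n
    simp only [wnormSq] at this
    linarith
  have hle1 : ∀ n ξ, ((1 : ℝ) + ‖ξ‖ ^ 2) ^ (1/2 : ℝ) * ‖(V1 n).ft ξ‖ ^ 2 ≤
      ((1 : ℝ) + ‖ξ‖ ^ 2) ^ (1/2 : ℝ) * ‖(V1 n).ft ξ‖ ^ 2 +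
      ((1 : ℝ) + ‖ξ‖ ^ 2) ^ (1/2 : ℝ) * ‖(V2 n).ft ξ‖ ^ 2 := fun n ξ =>
    le_add_of_nonneg_right (by positivity)
  have hle2 : ∀ n ξ, ((1 : ℝ) + ‖ξ‖ ^ 2) ^ (1/2 : ℝ) * ‖(V2 n).ft ξ‖ ^ 2 ≤
      ((1 : ℝ) + ‖ξ‖ ^ 2) ^ (1/2 : ℝ) * ‖(V1 n).ft ξ‖ ^ 2 +
      ((1 : ℝ) + ‖ξ‖ ^ 2) ^ (1/2 : ℝ) * ‖(V2 n).ft ξ‖ ^ 2 := fun n ξ =>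
    le_add_of_nonneg_left (by positivity)
  have hi1 : ∀ n, Integrable (fun ξ => ((1 : ℝ) + ‖ξ‖ ^ 2) ^ (1/2 : ℝ) * ‖(V1 n).ft ξ‖ ^ 2) :=
    fun n => (hti n).mono' ((wt_cont _).mul ((V1 n).cont.norm.pow 2)).aestronglyMeasurable
      (Eventually.of_forall fun ξ => by
        rw [Real.norm_of_nonneg (by positivity)]; exact hle1 n ξ)
  have hi2 : ∀ n, Integrable (fun ξ => ((1 : ℝ) + ‖ξ‖ ^ 2) ^ (1/2 : ℝ) * ‖(V2 n).ft ξ‖ ^ 2) :=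
    fun n => (hti n).mono' ((wt_cont _).mul ((V2 n).cont.norm.pow 2)).aestronglyMeasurable
      (Eventually.of_forall fun ξ => by
        rw [Real.norm_of_nonneg (by positivity)]; exact hle2 n ξ)
  have hD1 := fun n => (integral_mono (hi1 n) (hti n) (hle1 n)).trans (htD n)
  have hD2 := fun n => (integral_mono (hi2 n) (hti n) (hle2 n)).trans (htD n)
  obtain ⟨φ, hφ, L1, hL1⟩ := component hΓ.2.1 V1 _ hi1 hD1
  obtain ⟨χ, hχ, L2, hL2⟩ := component hΓ.2.1 (fun n => V2 (φ n)) _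
    (fun n => hi2 (φ n)) (fun n => hD2 (φ n))
  refine ⟨φ ∘ χ, hφ.comp hχ, L1, L2, ?_⟩
  simpa using (hL1.comp hχ.tendsto_atTop).add hL2

end
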